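/- Let S be a nonempty finite type, let P : Matrix S S ℝ be a row-stochastic matrix, and let γ ∈ ℝ with 0 ≤ γ < 1. Then every entry of the matrix (I − γ·P)⁻¹ is nonnegative. Consequently, for any vector x : S → ℝ with x(s) ≥ 0 for all s, the vector (I − γ·P)⁻¹ *ᵥ x has all components nonnegative. -/

import Mathlib

open Matrix BigOperators

/-- A matrix is row-stochastic if all entries are nonnegative and every row sums to 1. -/
def RowStochastic {S : Type*} [Fintype S] (P : Matrix S S ℝ) : Prop :=
  (∀ i j, 0 ≤ P i j) ∧ (∀ i, ∑ j, P i j = 1)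

/-!
A matrix `M` with nonpositive off-diagonal entries satisfies a minimum principle as soon as
`M w > 0` for some `w ≥ 0`, which is then positive: let `i` minimise `v i / w i` and let `t` be the
minimum. Then `v - t w` is nonnegative and vanishes at `i`, so `(M v) i ≤ t (M w) i`, and `M v ≥ 0`
forces `t ≥ 0`, whence `v ≥ t w ≥ 0`. So `M` is injective and its inverse preserves nonnegative
vectors. For `M = 1 - γ P` take `w = 1`.
-/

/-- A Z-matrix: all off-diagonal entries are nonpositive. The diagonal is unconstrained. This is
the sign pattern of `1 - A` for `A` nonnegative. -/
def IsZMatrix {n R : Type*} [Zero R] [LE R] (M : Matrix n n R) : Prop :=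
  ∀ ⦃i j⦄, i ≠ j → M i j ≤ 0

namespace IsZMatrix

variable {n : Type*}

theorem one_sub_smul {R : Type*} [Ring R] [PartialOrder R] [IsOrderedRing R] [DecidableEq n]
    {A : Matrix n n R} (hA : ∀ i j, i ≠ j → 0 ≤ A i j) {c : R} (hc : 0 ≤ c) :
    IsZMatrix (1 - c • A) := fun i j hij ↦ by
  simpa [one_apply_ne hij] using mul_nonneg hc (hA i j hij)

variable [Fintype n]

section OrderedSemiring

variable {R : Type*} [Semiring R] [PartialOrder R] [IsOrderedRing R] {M : Matrix n n R}

theorem mulVec_apply_nonpos (hM : IsZMatrix M) {u : n → R} (hu : 0 ≤ u) {i : n} (hi : u i = 0) :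
    (M *ᵥ u) i ≤ 0 := by
  refine Finset.sum_nonpos fun j _ ↦ ?_
  obtain rfl | hij := eq_or_ne i j
  · rw [hi, mul_zero]
  · exact mul_nonpos_of_nonpos_of_nonneg (hM hij) (hu j)

theorem pos_of_mulVec_pos (hM : IsZMatrix M) {w : n → R} (hw : 0 ≤ w)
    (hMw : ∀ i, 0 < (M *ᵥ w) i) (i : n) : 0 < w i :=
  (hw i).lt_of_ne' fun hi ↦ (hM.mulVec_apply_nonpos hw hi).not_gt (hMw i)

end OrderedSemiring

variable {K : Type*} [Field K] [LinearOrder K] [IsStrictOrderedRing K] {M : Matrix n n K}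
  {w : n → K}

theorem nonneg_of_mulVec_nonneg (hM : IsZMatrix M) (hw : 0 ≤ w) (hMw : ∀ i, 0 < (M *ᵥ w) i)
    {v : n → K} (hv : 0 ≤ M *ᵥ v) : 0 ≤ v := by
  intro j
  have w_pos := hM.pos_of_mulVec_pos hw hMw
  have : Nonempty n := ⟨j⟩
  obtain ⟨i, hi⟩ := Finite.exists_min fun k ↦ v k / w k
  set t := v i / w i with ht
  have t_smul_le : t • w ≤ v := fun k ↦ (le_div_iff₀ (w_pos k)).1 (hi k)
  have eq_at_min : (v - t • w) i = 0 := by simp [ht, (w_pos i).ne']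
  have mulVec_le : (M *ᵥ v) i ≤ t * (M *ᵥ w) i := by
    simpa [mulVec_sub, mulVec_smul] using
      hM.mulVec_apply_nonpos (sub_nonneg.2 t_smul_le) eq_at_min
  have t_nonneg : 0 ≤ t := nonneg_of_mul_nonneg_left ((hv i).trans mulVec_le) (hMw i)
  exact (mul_nonneg t_nonneg (hw j)).trans (t_smul_le j)

theorem le_of_mulVec_le (hM : IsZMatrix M) (hw : 0 ≤ w) (hMw : ∀ i, 0 < (M *ᵥ w) i)
    {u v : n → K} (huv : M *ᵥ u ≤ M *ᵥ v) : u ≤ v :=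
  sub_nonneg.1 <| hM.nonneg_of_mulVec_nonneg hw hMw <| by rwa [mulVec_sub, sub_nonneg]

variable [DecidableEq n]

theorem isUnit_of_mulVec_pos (hM : IsZMatrix M) (hw : 0 ≤ w) (hMw : ∀ i, 0 < (M *ᵥ w) i) :
    IsUnit M :=
  mulVec_injective_iff_isUnit.1 fun _ _ huv ↦
    (hM.le_of_mulVec_le hw hMw huv.le).antisymm (hM.le_of_mulVec_le hw hMw huv.ge)

theorem inv_mulVec_nonneg (hM : IsZMatrix M) (hw : 0 ≤ w) (hMw : ∀ i, 0 < (M *ᵥ w) i)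
    {x : n → K} (hx : 0 ≤ x) : 0 ≤ M⁻¹ *ᵥ x := by
  have hdet : IsUnit M.det := (isUnit_iff_isUnit_det M).1 (hM.isUnit_of_mulVec_pos hw hMw)
  apply hM.nonneg_of_mulVec_nonneg hw hMw
  rwa [mulVec_mulVec, mul_nonsing_inv M hdet, one_mulVec]

theorem inv_apply_nonneg (hM : IsZMatrix M) (hw : 0 ≤ w) (hMw : ∀ i, 0 < (M *ᵥ w) i) (i j : n) :
    0 ≤ M⁻¹ i j := by
  simpa [mulVec_single_one] using
    hM.inv_mulVec_nonneg hw hMw (Pi.single_nonneg.2 zero_le_one : 0 ≤ Pi.single j (1 : K)) i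

end IsZMatrix

theorem RowStochastic.mulVec_one {S : Type*} [Fintype S] {P : Matrix S S ℝ}
    (hP : RowStochastic P) : P *ᵥ 1 = 1 :=
  funext fun i ↦ by simpa [mulVec, dotProduct] using hP.2 i

theorem inv_one_sub_discount_smul_nonneg_general {S K : Type*} [Fintype S] [DecidableEq S]
    [Field K] [LinearOrder K] [IsStrictOrderedRing K] {P : Matrix S S K}
    (hP : ∀ i j, i ≠ j → 0 ≤ P i j) {γ : K} (hγ : 0 ≤ γ) {w : S → K} (hw : 0 ≤ w)
    (hPw : ∀ i, γ * (P *ᵥ w) i < w i) :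
    (∀ i j : S, 0 ≤ (1 - γ • P)⁻¹ i j) ∧
    (∀ x : S → K, (∀ s, 0 ≤ x s) → ∀ s, 0 ≤ ((1 - γ • P)⁻¹ *ᵥ x) s) := by
  have hZ : IsZMatrix (1 - γ • P) := .one_sub_smul hP hγ
  have mulVec_pos : ∀ i, 0 < ((1 - γ • P) *ᵥ w) i := fun i ↦ by
    simpa [sub_mulVec, smul_mulVec] using hPw i
  exact ⟨hZ.inv_apply_nonneg hw mulVec_pos, fun x hx ↦ hZ.inv_mulVec_nonneg hw mulVec_pos hx⟩

theorem inv_one_sub_discount_smul_nonneg {S : Type*} [Fintype S] [DecidableEq S] [Nonempty S]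
    (P : Matrix S S ℝ) (hP : RowStochastic P) (γ : ℝ) (hγ0 : 0 ≤ γ) (hγ1 : γ < 1) :
    (∀ i j : S, 0 ≤ (1 - γ • P)⁻¹ i j) ∧
    (∀ x : S → ℝ, (∀ s, 0 ≤ x s) → ∀ s, 0 ≤ ((1 - γ • P)⁻¹ *ᵥ x) s) :=
  inv_one_sub_discount_smul_nonneg_general (fun i j _ ↦ hP.1 i j) hγ0 zero_le_one
    fun i ↦ by simpa [hP.mulVec_one] using hγ1
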